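/- Let A = (λ_x · 1_S)_{x∈X} be a coin-tossing measurement on a state space S, where (λ_x)_{x∈X} is a probability distribution on a finite set X. Then A is α-intersubjective if and only if α ≤ max{2·max_x λ_x − 1, 0}. -/

import Mathlib

open Finset

/-- An effect on the state space `S`: an affine map taking values in `[0,1]` on `S`. -/
def IsEffect {V : Type*} [AddCommGroup V] [Module ℝ V] (S : Set V) (a : V →ᵃ[ℝ] ℝ) : Prop :=
  ∀ s ∈ S, 0 ≤ a s ∧ a s ≤ 1

/-- A finite-outcome measurement: a family of effects summing to the unit effect on `S`. -/
def IsMeasurement {V : Type*} [AddCommGroup V] [Module ℝ V] (S : Set V) {X : Type*} [Fintype X]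
    (A : X → (V →ᵃ[ℝ] ℝ)) : Prop :=
  (∀ x, IsEffect S (A x)) ∧ ∀ s ∈ S, ∑ x, A x s = 1

/-- A joint measurement of `A` and `B`: a measurement on `X × Y` whose marginals are `A`, `B`. -/
def IsJointMeasurement {V : Type*} [AddCommGroup V] [Module ℝ V] (S : Set V)
    {X Y : Type*} [Fintype X] [Fintype Y]
    (A : X → (V →ᵃ[ℝ] ℝ)) (B : Y → (V →ᵃ[ℝ] ℝ)) (C : X × Y → (V →ᵃ[ℝ] ℝ)) : Prop :=
  IsMeasurement S C ∧ (∀ x, ∀ s ∈ S, ∑ y, C (x, y) s = A x s) ∧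
    (∀ y, ∀ s ∈ S, ∑ x, C (x, y) s = B y s)

/-- `A` is `α`-intersubjective: every joint measurement of `A` with itself has diagonal
weight at least `α · 1_S`. -/
def Intersubjective {V : Type*} [AddCommGroup V] [Module ℝ V] (S : Set V) {X : Type*} [Fintype X]
    (α : ℝ) (A : X → (V →ᵃ[ℝ] ℝ)) : Prop :=
  ∀ C : X × X → (V →ᵃ[ℝ] ℝ), IsJointMeasurement S A A C → ∀ s ∈ S, α ≤ ∑ x, C (x, x) s

/-- `A` is `α`-sharp: for distinct outcomes `x ≠ x'`, any effect below both `A x` and `A x'`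
is below `(1 - α) · 1_S`. -/
def SharpMeasurement {V : Type*} [AddCommGroup V] [Module ℝ V] (S : Set V) {X : Type*} [Fintype X]
    (α : ℝ) (A : X → (V →ᵃ[ℝ] ℝ)) : Prop :=
  ∀ x x', x ≠ x' → ∀ b : V →ᵃ[ℝ] ℝ, IsEffect S b → (∀ s ∈ S, b s ≤ A x s) →
    (∀ s ∈ S, b s ≤ A x' s) → ∀ s ∈ S, b s ≤ 1 - α

/-!
At a fixed state, a joint measurement of `A` with itself is a coupling of the distribution `λ` with
itself, and conversely every such coupling `c` gives the state-independent joint measurement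
`c x y · 1_S`. So the best possible `α` is the least trace of a self-coupling of `λ`.

The mass of a coupling outside the row and the column of `x` is `1 - 2 λ_x + c x x`; its
nonnegativity bounds the trace from below by `2 λ_x - 1`. By compactness some coupling `c` has least
trace. If `c x x > 0`, there can be no mass at any `(u, v)` outside the row and the column of `x`:
moving a little mass from `(x, x)` and `(u, v)` to `(x, v)` and `(u, x)` would lower the trace.
Hence either the trace is `0`, or it is `c x x` alone and equals `2 λ_x - 1`.
-/

/-- A coupling (transport plan) of the weights `p` and `q`: a nonnegative matrix with row sums `p`
and column sums `q`. The values at a state of a joint measurement form a coupling of the values of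
its two marginals, and the probability that the two outcomes agree is its trace. -/
structure IsCoupling {X Y : Type*} [Fintype X] [Fintype Y] (p : X → ℝ) (q : Y → ℝ)
    (c : Matrix X Y ℝ) : Prop where
  nonneg : ∀ x y, 0 ≤ c x y
  row_sum : ∀ x, ∑ y, c x y = p x
  col_sum : ∀ y, ∑ x, c x y = q y

section Rectangular

variable {X Y : Type*} [Fintype X] [Fintype Y] {p : X → ℝ} {q : Y → ℝ} {c : Matrix X Y ℝ}

theorem exists_isCoupling (hp : ∀ x, 0 ≤ p x) (hq : ∀ y, 0 ≤ q y) (hpq : ∑ x, p x = ∑ y, q y) :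
    ∃ c, IsCoupling p q c := by
  -- If the total mass is `0`, then `p` and `q` vanish and so does this matrix, as `0 / 0 = 0`.
  refine ⟨Matrix.of fun x y => p x * q y / ∑ y, q y, fun x y => ?_, fun x => ?_, fun y => ?_⟩
  · exact div_nonneg (mul_nonneg (hp x) (hq y)) (sum_nonneg fun y _ => hq y)
  · simp only [Matrix.of_apply, ← sum_div, ← mul_sum]
    refine mul_div_cancel_of_imp fun h => ?_
    exact (sum_eq_zero_iff_of_nonneg fun x _ => hp x).1 (hpq.trans h) x (mem_univ x)
  · simp only [Matrix.of_apply, ← sum_div, ← sum_mul, hpq]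
    refine mul_div_cancel_left_of_imp fun h => ?_
    exact (sum_eq_zero_iff_of_nonneg fun y _ => hq y).1 h y (mem_univ y)

namespace IsCoupling

theorem apply_le (hc : IsCoupling p q c) (x : X) (y : Y) : c x y ≤ p x :=
  hc.row_sum x ▸ single_le_sum (fun y _ => hc.nonneg x y) (mem_univ y)

theorem apply_le_sum (hc : IsCoupling p q c) (x : X) (y : Y) : c x y ≤ ∑ x, p x :=
  (hc.apply_le x y).trans <|
    single_le_sum (fun x _ => hc.row_sum x ▸ sum_nonneg fun y _ => hc.nonneg x y) (mem_univ x)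

theorem sum_erase_sum_erase [DecidableEq X] [DecidableEq Y] (hc : IsCoupling p q c)
    (x : X) (y : Y) :
    ∑ u ∈ univ.erase x, ∑ v ∈ univ.erase y, c u v = ∑ u, p u - p x - q y + c x y := by
  simp only [sum_erase_eq_sub (mem_univ _), sum_sub_distrib, hc.row_sum, hc.col_sum]
  ring

theorem add_vecMulVec (hc : IsCoupling p q c) {a : X → ℝ} {b : Y → ℝ} (ha : ∑ x, a x = 0)
    (hb : ∑ y, b y = 0) (hnonneg : ∀ x y, 0 ≤ c x y + a x * b y) :
    IsCoupling p q (c + Matrix.vecMulVec a b) where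
  nonneg := hnonneg
  row_sum x := by
    simp only [Matrix.add_apply, Matrix.vecMulVec_apply, sum_add_distrib, ← mul_sum, hc.row_sum,
      hb, mul_zero, add_zero]
  col_sum y := by
    simp only [Matrix.add_apply, Matrix.vecMulVec_apply, sum_add_distrib, ← sum_mul, hc.col_sum,
      ha, zero_mul, add_zero]

/-- Mass `ε` moves from the entries `(x, y)` and `(u, v)` to the entries `(x, v)` and `(u, y)`. -/
theorem exchange [DecidableEq X] [DecidableEq Y] (hc : IsCoupling p q c) {x u : X} {y v : Y}
    {ε : ℝ} (hε : 0 ≤ ε) (hxy : ε ≤ c x y) (huv : ε ≤ c u v) :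
    IsCoupling p q
      (c + Matrix.vecMulVec (Pi.single x ε - Pi.single u ε) (Pi.single v 1 - Pi.single y 1)) := by
  refine hc.add_vecMulVec (by simp) (by simp) fun i j => ?_
  have hij := hc.nonneg i j
  simp only [Pi.sub_apply, Pi.single_apply]
  split_ifs <;> grind

end IsCoupling

theorem isCompact_setOf_isCoupling (p : X → ℝ) (q : Y → ℝ) :
    IsCompact {c | IsCoupling p q c} := by
  have hbox : IsCompact (Set.univ.pi fun x => Set.univ.pi fun _ => Set.Icc 0 (p x) :
      Set (Matrix X Y ℝ)) :=
    isCompact_univ_pi fun x => isCompact_univ_pi fun _ => isCompact_Icc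
  have hset : {c | IsCoupling p q c} = {c : Matrix X Y ℝ | ∀ x y, 0 ≤ c x y} ∩
      ({c | ∀ x, ∑ y, c x y = p x} ∩ {c | ∀ y, ∑ x, c x y = q y}) :=
    Set.ext fun c => ⟨fun hc => ⟨hc.nonneg, hc.row_sum, hc.col_sum⟩,
      fun hc => ⟨hc.1, hc.2.1, hc.2.2⟩⟩
  refine hbox.of_isClosed_subset ?_ fun c hc x _ y _ => ⟨hc.nonneg x y, hc.apply_le x y⟩
  simp only [hset, Set.ofPred_forall]
  refine .inter (isClosed_iInter fun x => isClosed_iInter fun y => ?_)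
    (.inter (isClosed_iInter fun x => ?_) (isClosed_iInter fun y => ?_))
  · exact isClosed_le (by fun_prop) (by fun_prop)
  · exact isClosed_eq (by fun_prop) (by fun_prop)
  · exact isClosed_eq (by fun_prop) (by fun_prop)

end Rectangular

section Square

variable {X : Type*} [Fintype X] {p q : X → ℝ} {c : Matrix X X ℝ}

namespace IsCoupling

theorem trace_nonneg (hc : IsCoupling p q c) : 0 ≤ c.trace :=
  sum_nonneg fun x _ => hc.nonneg x x

theorem add_sub_sum_le_trace (hc : IsCoupling p q c) (x : X) :
    p x + q x - ∑ u, p u ≤ c.trace := by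
  classical
  have hrest : 0 ≤ ∑ u ∈ univ.erase x, ∑ v ∈ univ.erase x, c u v :=
    sum_nonneg fun u _ => sum_nonneg fun v _ => hc.nonneg u v
  have hdiag : c x x ≤ c.trace :=
    single_le_sum (f := fun u => c u u) (fun u _ => hc.nonneg u u) (mem_univ x)
  linarith [hc.sum_erase_sum_erase x x]

theorem exists_trace_lt (hc : IsCoupling p q c) {x u v : X} (hu : u ≠ x) (hv : v ≠ x)
    (hx : 0 < c x x) (huv : 0 < c u v) : ∃ c', IsCoupling p q c' ∧ c'.trace < c.trace := by
  classical
  have hε : 0 < min (c x x) (c u v) := lt_min hx huv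
  refine ⟨_, hc.exchange hε.le (min_le_left _ _) (min_le_right _ _), ?_⟩
  have hvu : (0 : ℝ) ≤ (Pi.single v 1 : X → ℝ) u := by
    rw [Pi.single_apply]; positivity
  rw [Matrix.trace_add, Matrix.trace_vecMulVec]
  simp only [sub_dotProduct, single_dotProduct, Pi.sub_apply, Pi.single_eq_same,
    Pi.single_eq_of_ne hv.symm, Pi.single_eq_of_ne hu]
  nlinarith

theorem trace_eq_zero_or_of_isMinOn (hc : IsCoupling p q c)
    (hmin : IsMinOn Matrix.trace {c | IsCoupling p q c} c) :
    c.trace = 0 ∨ ∃ x, c.trace = p x + q x - ∑ u, p u := by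
  classical
  by_cases hdiag : ∀ x, c x x = 0
  · exact .inl (sum_eq_zero fun x _ => hdiag x)
  push Not at hdiag
  obtain ⟨x, hx⟩ := hdiag
  have hzero : ∀ u ≠ x, ∀ v ≠ x, c u v = 0 := by
    intro u hu v hv
    by_contra huv
    obtain ⟨c', hc', hlt⟩ := hc.exists_trace_lt hu hv
      ((hc.nonneg x x).lt_of_ne' hx) ((hc.nonneg u v).lt_of_ne' huv)
    exact hlt.not_ge (hmin hc')
  have htrace : c.trace = c x x :=
    sum_eq_single x (fun u _ hu => hzero u hu u hu) (by simp)
  have hrest : ∑ u ∈ univ.erase x, ∑ v ∈ univ.erase x, c u v = 0 :=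
    sum_eq_zero fun u hu => sum_eq_zero fun v hv =>
      hzero u (ne_of_mem_erase hu) v (ne_of_mem_erase hv)
  exact .inr ⟨x, by linarith [hc.sum_erase_sum_erase x x]⟩

end IsCoupling

theorem isLeast_trace_image_isCoupling (hp : ∀ x, 0 ≤ p x) (hq : ∀ x, 0 ≤ q x)
    (hpq : ∑ x, p x = ∑ x, q x) {m : X} (hm : ∀ x, p x + q x ≤ p m + q m) :
    IsLeast (Matrix.trace '' {c | IsCoupling p q c}) (max (p m + q m - ∑ x, p x) 0) := by
  have hlower {c : Matrix X X ℝ} (hc : IsCoupling p q c) :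
      max (p m + q m - ∑ x, p x) 0 ≤ c.trace :=
    max_le (hc.add_sub_sum_le_trace m) hc.trace_nonneg
  have hcont : Continuous (Matrix.trace : Matrix X X ℝ → ℝ) := by fun_prop
  obtain ⟨c, hc, hmin⟩ := (isCompact_setOf_isCoupling p q).exists_isMinOn
    (exists_isCoupling hp hq hpq) hcont.continuousOn
  refine ⟨⟨c, hc, le_antisymm ?_ (hlower hc)⟩, Set.forall_mem_image.2 fun c hc => hlower hc⟩
  obtain htrace | ⟨x, htrace⟩ := hc.trace_eq_zero_or_of_isMinOn hmin
  · exact htrace.trans_le (le_max_right _ _)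
  · exact le_max_of_le_left (by linarith [hm x])

end Square

section Measurement

variable {V : Type*} [AddCommGroup V] [Module ℝ V] {S : Set V}
  {X Y : Type*} [Fintype X] [Fintype Y]

theorem IsJointMeasurement.isCoupling {A : X → (V →ᵃ[ℝ] ℝ)} {B : Y → (V →ᵃ[ℝ] ℝ)}
    {C : X × Y → (V →ᵃ[ℝ] ℝ)} (hC : IsJointMeasurement S A B C) {s : V} (hs : s ∈ S) :
    IsCoupling (fun x => A x s) (fun y => B y s) (Matrix.of fun x y => C (x, y) s) where
  nonneg x y := (hC.1.1 (x, y) s hs).1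
  row_sum x := hC.2.1 x s hs
  col_sum y := hC.2.2 y s hs

theorem IsCoupling.isJointMeasurement_const {p : X → ℝ} {q : Y → ℝ} {c : Matrix X Y ℝ}
    (hc : IsCoupling p q c) (hp : ∑ x, p x = 1) :
    IsJointMeasurement S (fun x => AffineMap.const ℝ V (p x)) (fun y => AffineMap.const ℝ V (q y))
      (fun z => AffineMap.const ℝ V (c z.1 z.2)) := by
  refine ⟨⟨fun z s _ => ⟨hc.nonneg _ _, hp ▸ hc.apply_le_sum _ _⟩, fun s _ => ?_⟩,
    fun x s _ => hc.row_sum x, fun y s _ => hc.col_sum y⟩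
  simp only [AffineMap.const_apply, Fintype.sum_prod_type, hc.row_sum, hp]

theorem intersubjective_const_iff (hS : S.Nonempty) {l : X → ℝ} (hl : ∑ x, l x = 1) {α : ℝ} :
    Intersubjective S α (fun x => AffineMap.const ℝ V (l x)) ↔
      ∀ c, IsCoupling l l c → α ≤ c.trace := by
  constructor
  · intro h c hc
    obtain ⟨s, hs⟩ := hS
    exact h _ (hc.isJointMeasurement_const hl) s hs
  · intro h C hC s hs
    exact h _ (hC.isCoupling hs)

end Measurement

theorem coinTossing_intersubjective_iff_general {V : Type*} [AddCommGroup V] [Module ℝ V]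
    (S : Set V) (hSne : S.Nonempty)
    {X : Type*} [Fintype X] (l : X → ℝ) (hl0 : ∀ x, 0 ≤ l x) (hl1 : ∑ x, l x = 1)
    (M : ℝ) (hM : IsGreatest (Set.range l) M)
    (A : X → (V →ᵃ[ℝ] ℝ)) (hA : ∀ x, A x = AffineMap.const ℝ V (l x)) (α : ℝ) :
    Intersubjective S α A ↔ α ≤ max (2 * M - 1) 0 := by
  obtain ⟨⟨m, rfl⟩, hmax⟩ := hM
  have hm (x : X) : l x + l x ≤ l m + l m :=
    add_le_add (hmax (Set.mem_range_self x)) (hmax (Set.mem_range_self x))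
  have hleast := isLeast_trace_image_isCoupling hl0 hl0 rfl hm
  rw [hl1, ← two_mul] at hleast
  rw [funext hA, intersubjective_const_iff hSne hl1, le_isGLB_iff hleast.isGLB]
  exact Set.forall_mem_image.symm

/-- a coin-tossing measurement `(λ_x · 1_S)_x` is `α`-intersubjective iff
`α ≤ max {2 · max_x λ_x - 1, 0}`. -/
theorem coinTossing_intersubjective_iff {V : Type*} [NormedAddCommGroup V] [NormedSpace ℝ V]
    (S : Set V) (hSconv : Convex ℝ S) (hScomp : IsCompact S) (hSne : S.Nonempty)
    {X : Type*} [Fintype X] (l : X → ℝ) (hl0 : ∀ x, 0 ≤ l x) (hl1 : ∑ x, l x = 1)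
    (M : ℝ) (hM : IsGreatest (Set.range l) M)
    (A : X → (V →ᵃ[ℝ] ℝ)) (hA : ∀ x, A x = AffineMap.const ℝ V (l x)) (α : ℝ) :
    Intersubjective S α A ↔ α ≤ max (2 * M - 1) 0 :=
  coinTossing_intersubjective_iff_general S hSne l hl0 hl1 M hM A hA α
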